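/- Let A = L_n(ℓ_1) L_{n−1}(ℓ_2) ⋯ L_2(ℓ_{n−1}) D U_2(u_{n−1}) ⋯ U_{n−1}(u_2) U_n(u_1), where all ℓ_i, u_i > 0 and D is a positive diagonal matrix. Then A is oscillatory with exponent r(A) = n−1. -/

import Mathlib

/-- A square real matrix is totally nonnegative if all its minors are nonnegative. -/
def TotallyNonneg {n : ℕ} (A : Matrix (Fin n) (Fin n) ℝ) : Prop :=
  ∀ (k : ℕ) (r c : Fin k → Fin n), StrictMono r → StrictMono c →
    0 ≤ (A.submatrix r c).det

/-- A square real matrix is totally positive if all its minors are positive. -/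
def TotallyPos {n : ℕ} (A : Matrix (Fin n) (Fin n) ℝ) : Prop :=
  ∀ (k : ℕ) (r c : Fin k → Fin n), StrictMono r → StrictMono c →
    0 < (A.submatrix r c).det

/-- The lower elementary bidiagonal matrix L_i(q) = I + q·E_{i,i−1} (1-indexed i). -/
def Lmat (n i : ℕ) (q : ℝ) : Matrix (Fin n) (Fin n) ℝ :=
  1 + Matrix.of fun a b : Fin n => if a.val + 1 = i ∧ b.val + 2 = i then q else 0

/-- The upper elementary bidiagonal matrix U_i(q) = I + q·E_{i−1,i} (1-indexed i). -/
def Umat (n i : ℕ) (q : ℝ) : Matrix (Fin n) (Fin n) ℝ :=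
  1 + Matrix.of fun a b : Fin n => if a.val + 2 = i ∧ b.val + 1 = i then q else 0

/-!
By Cauchy–Binet, a minor of a product of totally nonnegative matrices is positive as soon as one
intermediate index set makes every factor's minor positive. The lower factor `L` of `A` has positive
entries on and below the diagonal, so its minor with rows `I` and columns `K` is positive whenever
`K₁ ≤ I₁ < K₂ ≤ I₂ < ⋯`; transposed, the upper factor moves indices up in the same way. One factor
`A` therefore settles one more index at each end of the set, and after `t` steps the first `t`
indices are no longer above, and the last `t` no longer below, their targets. A proper subset has at
most `n - 1` indices, so `A ^ (n - 1)` is totally positive.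

Conversely `A⁻¹ = U⁻¹ D⁻¹ L⁻¹` is upper Hessenberg, since the factors of `L` multiply out to
`L⁻¹ = 1 - ∑ⱼ (Lⱼ - 1)`. For `r < n - 1` the bottom left entry of `(A ^ r)⁻¹` vanishes, and up to a
nonzero scalar this entry is a minor of `A ^ r`.
-/

section CauchyBinet

open Finset Matrix Equiv

variable {k : ℕ} {ι R : Type*} [Fintype ι]

theorem sum_eq_sum_strictMono_sum_perm [LinearOrder ι] [AddCommMonoid R] (F : (Fin k → ι) → R)
    (hF : ∀ f, ¬ Function.Injective f → F f = 0) :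
    ∑ f, F f = ∑ s : Fin k → ι with StrictMono s, ∑ σ : Perm (Fin k), F (s ∘ σ) := by
  rw [← sum_product']
  refine (sum_of_injOn (fun p : (Fin k → ι) × Perm (Fin k) ↦ p.1 ∘ p.2) ?_
    (fun _ _ ↦ mem_coe.2 (mem_univ _)) ?_ fun _ _ ↦ rfl).symm
  · rintro ⟨s, σ⟩ hs ⟨s', σ'⟩ hs' h
    replace hs : StrictMono s := by simpa using hs
    replace hs' : StrictMono s' := by simpa using hs'
    replace h : s ∘ σ = s' ∘ σ' := h
    obtain rfl : s = s' := (hs.range_inj hs').1 <| by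
      rw [← σ.surjective.range_comp s, h, σ'.surjective.range_comp]
    rw [DFunLike.coe_injective (hs.injective.comp_left h)]
  · refine fun f _ hf ↦ hF f fun hinj ↦ hf ?_
    have hsort : StrictMono (f ∘ Tuple.sort f) :=
      (Tuple.monotone_sort f).strictMono_of_injective (hinj.comp (Tuple.sort f).injective)
    exact ⟨(f ∘ Tuple.sort f, (Tuple.sort f)⁻¹), by simpa using hsort, by ext; simp⟩

variable [CommRing R]

theorem det_mul_eq_sum_prod_mul_det (M : Matrix (Fin k) ι R) (N : Matrix ι (Fin k) R) :
    (M * N).det = ∑ f : Fin k → ι, (∏ i, N (f i) i) * (M.submatrix id f).det := by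
  simp only [det_apply', mul_apply, prod_univ_sum, mul_sum, Fintype.piFinset_univ]
  rw [sum_comm]
  refine sum_congr rfl fun f _ ↦ sum_congr rfl fun σ _ ↦ ?_
  simp only [submatrix_apply, id, prod_mul_distrib]
  ring

variable [LinearOrder ι]

theorem det_mul_eq_sum_strictMono (M : Matrix (Fin k) ι R) (N : Matrix ι (Fin k) R) :
    (M * N).det = ∑ s : Fin k → ι with StrictMono s,
      (M.submatrix id s).det * (N.submatrix s id).det := by
  rw [det_mul_eq_sum_prod_mul_det, sum_eq_sum_strictMono_sum_perm]
  · refine sum_congr rfl fun s _ ↦ ?_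
    rw [det_apply' (N.submatrix s id), mul_sum]
    refine sum_congr rfl fun σ _ ↦ ?_
    change _ * ((M.submatrix id s).submatrix id σ).det = _
    rw [det_permute']
    simp only [Function.comp_apply, submatrix_apply, id]
    ring
  · intro f hf
    obtain ⟨i, j, hij, hne⟩ := Function.not_injective_iff.1 hf
    rw [det_zero_of_column_eq hne fun _ ↦ by simp only [submatrix_apply, hij], mul_zero]

theorem det_submatrix_mul_eq_sum_strictMono {α β : Type*} (A : Matrix α ι R) (B : Matrix ι β R)
    (r : Fin k → α) (c : Fin k → β) :
    ((A * B).submatrix r c).det = ∑ s : Fin k → ι with StrictMono s,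
      (A.submatrix r s).det * (B.submatrix s c).det := by
  rw [submatrix_mul A B r id c Function.bijective_id, det_mul_eq_sum_strictMono]
  rfl

end CauchyBinet

section Bidiagonal

open Finset Matrix Equiv

theorem det_submatrix_eq_prod_of_wcovBy {k : ℕ} {α R : Type*} [Preorder α] [CommRing R]
    {A : Matrix α α R} (hA : ∀ a b, A a b ≠ 0 → b ⩿ a) {r c : Fin k → α}
    (hr : StrictMono r) (hc : StrictMono c) :
    (A.submatrix r c).det = ∏ i, A (r i) (c i) := by
  rw [det_apply', sum_eq_single 1]
  · simp
  · intro σ _ hσ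
    by_contra hne
    have hcov (i) : c i ⩿ r (σ i) := hA _ _ fun h0 ↦
      hne (by rw [prod_eq_zero (mem_univ i) (by simpa using h0), mul_zero])
    refine hσ ((Perm.monotone_iff σ).1 fun p q hpq ↦ ?_)
    by_contra! hlt
    have hpq' : p < q := hpq.lt_of_ne fun h ↦ hlt.ne (h ▸ rfl)
    exact (hcov p).2 (hc hpq') ((hcov q).le.trans_lt (hr hlt))
  · simp

end Bidiagonal

namespace TotallyNonneg

open Matrix

variable {n : ℕ} {A B : Matrix (Fin n) (Fin n) ℝ}

theorem apply_nonneg (hA : TotallyNonneg A) (i j : Fin n) : 0 ≤ A i j := by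
  simpa using hA 1 (fun _ ↦ i) (fun _ ↦ j) (Subsingleton.strictMono _) (Subsingleton.strictMono _)

theorem mul (hA : TotallyNonneg A) (hB : TotallyNonneg B) : TotallyNonneg (A * B) := by
  intro k r c hr hc
  rw [det_submatrix_mul_eq_sum_strictMono]
  exact Finset.sum_nonneg fun s hs ↦
    have hs : StrictMono s := by simpa using hs
    mul_nonneg (hA k r s hr hs) (hB k s c hs hc)

theorem det_submatrix_mul_pos (hA : TotallyNonneg A) (hB : TotallyNonneg B) {k : ℕ}
    {r s c : Fin k → Fin n} (hr : StrictMono r) (hs : StrictMono s) (hc : StrictMono c)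
    (hAs : 0 < (A.submatrix r s).det) (hBs : 0 < (B.submatrix s c).det) :
    0 < ((A * B).submatrix r c).det := by
  rw [det_submatrix_mul_eq_sum_strictMono]
  refine Finset.sum_pos' (fun f hf ↦ ?_) ⟨s, by simpa using hs, mul_pos hAs hBs⟩
  have hf : StrictMono f := by simpa using hf
  exact mul_nonneg (hA k r f hr hf) (hB k f c hf hc)

theorem transpose (hA : TotallyNonneg A) : TotallyNonneg Aᵀ := fun k r c hr hc ↦ by
  rw [← transpose_submatrix, det_transpose]
  exact hA k c r hc hr

theorem of_wcovBy (hA₀ : ∀ a b, 0 ≤ A a b) (hA : ∀ a b, A a b ≠ 0 → b ⩿ a) : TotallyNonneg A :=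
  fun _ _ _ hr hc ↦ by
    rw [det_submatrix_eq_prod_of_wcovBy hA hr hc]
    exact Finset.prod_nonneg fun _ _ ↦ hA₀ _ _

theorem diagonal {d : Fin n → ℝ} (hd : ∀ i, 0 ≤ d i) : TotallyNonneg (Matrix.diagonal d) := by
  refine of_wcovBy (fun a b ↦ ?_) fun a b hab ↦ ?_
  · rw [diagonal_apply]
    split_ifs
    exacts [hd a, le_rfl]
  · obtain rfl : a = b := not_imp_comm.1 (diagonal_apply_ne d) hab
    exact .rfl

theorem one : TotallyNonneg (1 : Matrix (Fin n) (Fin n) ℝ) :=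
  diagonal_one (n := Fin n) (α := ℝ) ▸ diagonal fun _ ↦ zero_le_one

theorem list_prod {l : List (Matrix (Fin n) (Fin n) ℝ)} (hl : ∀ X ∈ l, TotallyNonneg X) :
    TotallyNonneg l.prod :=
  l.prod_induction TotallyNonneg (fun _ _ ↦ mul) one hl

theorem pow (hA : TotallyNonneg A) (t : ℕ) : TotallyNonneg (A ^ t) := by
  rw [← List.prod_replicate]
  exact list_prod fun X hX ↦ List.eq_of_mem_replicate hX ▸ hA

end TotallyNonneg

section Interlacing

open OrderDual

variable {ι α : Type*} {k t : ℕ}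

/-- The interlacing `c₁ ≤ r₁ < c₂ ≤ r₂ < ⋯` of two index sets listed by `c` and `r`; the minors of
a positive lower triangular matrix with rows `r` and columns `c` are then positive. -/
def Interlaces [Preorder ι] [Preorder α] (c r : ι → α) : Prop :=
  (∀ p, c p ≤ r p) ∧ ∀ p q, p < q → r p < c q

theorem Interlaces.strictMono_left [Preorder ι] [Preorder α] {c r : ι → α}
    (h : Interlaces c r) : StrictMono c :=
  fun p q hpq ↦ (h.1 p).trans_lt (h.2 p q hpq)

theorem Interlaces.strictMono_right [Preorder ι] [Preorder α] {c r : ι → α}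
    (h : Interlaces c r) : StrictMono r :=
  fun p q hpq ↦ (h.2 p q hpq).trans_le (h.1 q)

theorem exists_interlaces_le [Preorder ι] [LinearOrder α] {I J : ι → α} (hI : StrictMono I)
    (hJ : StrictMono J) (s : Set ι) (hs : ∀ p q, p < q → q ∈ s → I p ≤ J p) :
    ∃ K, Interlaces K I ∧ (∀ p ∈ s, K p ≤ J p) ∧ ∀ p, J p ≤ I p → J p ≤ K p := by
  classical
  refine ⟨fun p ↦ if p ∈ s then min (I p) (J p) else I p,
    ⟨fun p ↦ ?_, fun p q hpq ↦ ?_⟩, fun p hp ↦ ?_, fun p hp ↦ ?_⟩ <;> dsimp only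
  · split_ifs
    exacts [min_le_left _ _, le_rfl]
  · split_ifs with hq
    exacts [lt_min (hI hpq) ((hs p q hpq hq).trans_lt (hJ hpq)), hI hpq]
  · rw [if_pos hp]
    exact min_le_right _ _
  · split_ifs
    exacts [le_min hp le_rfl, hp]

theorem exists_interlaces_ge [Preorder ι] [LinearOrder α] {K J : ι → α} (hK : StrictMono K)
    (hJ : StrictMono J) (s : Set ι) (hs : ∀ p q, p < q → p ∈ s → J q ≤ K q) :
    ∃ M, Interlaces K M ∧ (∀ p ∈ s, J p ≤ M p) ∧ ∀ p, K p ≤ J p → M p ≤ J p := by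
  obtain ⟨M, ⟨hle, hlt⟩, hM⟩ := exists_interlaces_le (ι := ιᵒᵈ) (α := αᵒᵈ) hK.dual hJ.dual s
    fun p q hpq hq ↦ hs q p hpq hq
  exact ⟨M, ⟨hle, fun p q hpq ↦ hlt q p hpq⟩, hM⟩

/-- The state of an index set listed by `I` that has moved `t` steps towards the one listed by `J`:
its first `t` indices are not above, and its last `t` indices not below, their targets. -/
structure Settled [LE α] (t : ℕ) (I J : Fin k → α) : Prop where
  le : ∀ p : Fin k, p.val < t → I p ≤ J p
  ge : ∀ p : Fin k, k ≤ p.val + t → J p ≤ I p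

theorem Settled.zero [LE α] (I J : Fin k → α) : Settled 0 I J :=
  ⟨fun _ hp ↦ absurd hp (Nat.not_lt_zero _), fun p hp ↦ absurd hp p.isLt.not_ge⟩

theorem Settled.refl [Preorder α] (t : ℕ) (I : Fin k → α) : Settled t I I :=
  ⟨fun _ _ ↦ le_rfl, fun _ _ ↦ le_rfl⟩

theorem Settled.eq [PartialOrder α] {I J : Fin k → α} (h : Settled t I J) (hkt : k ≤ t) : I = J :=
  funext fun p ↦ le_antisymm (h.le p (by lia)) (h.ge p (by lia))

theorem Settled.exists_step [LinearOrder α] {I J : Fin k → α} (h : Settled t I J)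
    (hI : StrictMono I) (hJ : StrictMono J) :
    ∃ K M, Interlaces K I ∧ Interlaces K M ∧ Settled (t + 1) M J := by
  obtain ⟨K, hKI, hKle, hKge⟩ := exists_interlaces_le hI hJ {p | p.val < t + 1}
    fun p q hpq (hq : q.val < t + 1) ↦ h.le p (by lia)
  obtain ⟨M, hKM, hMge, hMle⟩ := exists_interlaces_ge hKI.strictMono_left hJ
    {p | k ≤ p.val + (t + 1)}
    fun p q hpq (hp : k ≤ p.val + (t + 1)) ↦ hKge q (h.ge q (by lia))
  exact ⟨K, M, hKI, hKM, fun p hp ↦ hMle p (hKle p hp), hMge⟩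

end Interlacing

section UpperBound

open Matrix

/-- Lower triangular matrices whose entries on and below the diagonal are all positive. -/
structure IsPosLowerTriangular {α R : Type*} [Preorder α] [Zero R] [LT R]
    (X : Matrix α α R) : Prop where
  isLowerTriangular : X.IsLowerTriangular
  apply_pos : ∀ ⦃a b⦄, b ≤ a → 0 < X a b

theorem IsPosLowerTriangular.det_submatrix_pos {ι α R : Type*} [Fintype ι] [LinearOrder ι]
    [Preorder α] [CommRing R] [PartialOrder R] [IsStrictOrderedRing R] {X : Matrix α α R}
    (hX : IsPosLowerTriangular X) {r c : ι → α} (h : Interlaces c r) :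
    0 < (X.submatrix r c).det := by
  have hlower : (X.submatrix r c).IsLowerTriangular := fun p q hpq ↦
    hX.isLowerTriangular (h.2 p q hpq)
  rw [det_of_isLowerTriangular _ hlower]
  exact Finset.prod_pos fun p _ ↦ hX.apply_pos (h.1 p)

theorem IsPosLowerTriangular.mul_diagonal {α R : Type*} [Fintype α] [LinearOrder α] [Semiring R]
    [PartialOrder R] [IsStrictOrderedRing R] {X : Matrix α α R} (hX : IsPosLowerTriangular X)
    {d : α → R} (hd : ∀ i, 0 < d i) : IsPosLowerTriangular (X * diagonal d) where
  isLowerTriangular := hX.isLowerTriangular.mul (blockTriangular_diagonal d)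
  apply_pos a b hba := by
    rw [Matrix.mul_diagonal]
    exact mul_pos (hX.apply_pos hba) (hd b)

variable {n k : ℕ} {X Y : Matrix (Fin n) (Fin n) ℝ}

theorem det_submatrix_mul_transpose_pos (hX : TotallyNonneg X) (hX' : IsPosLowerTriangular X)
    (hY : TotallyNonneg Y) (hY' : IsPosLowerTriangular Y) {I K M : Fin k → Fin n}
    (hKI : Interlaces K I) (hKM : Interlaces K M) : 0 < ((X * Yᵀ).submatrix I M).det := by
  refine hX.det_submatrix_mul_pos hY.transpose hKI.strictMono_right hKI.strictMono_left
    hKM.strictMono_right (hX'.det_submatrix_pos hKI) ?_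
  rw [← transpose_submatrix, det_transpose]
  exact hY'.det_submatrix_pos hKM

theorem Settled.det_submatrix_pow_pos (hX : TotallyNonneg X) (hX' : IsPosLowerTriangular X)
    (hY : TotallyNonneg Y) (hY' : IsPosLowerTriangular Y) {I J : Fin k → Fin n}
    (hI : StrictMono I) (hJ : StrictMono J) {s t : ℕ} (h : Settled s I J) (hk : k ≤ s + t) :
    0 < (((X * Yᵀ) ^ t).submatrix I J).det := by
  induction t generalizing s I with
  | zero =>
    rw [h.eq hk, pow_zero, submatrix_one _ hJ.injective, det_one]
    exact one_pos
  | succ t ih =>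
    obtain ⟨K, M, hKI, hKM, hMJ⟩ := h.exists_step hI hJ
    have hM := hKM.strictMono_right
    have hA := hX.mul hY.transpose
    rw [pow_succ']
    exact hA.det_submatrix_mul_pos (hA.pow t) hI hM hJ
      (det_submatrix_mul_transpose_pos hX hX' hY hY' hKI hKM) (ih hM hMJ (by lia))

theorem totallyPos_mul_transpose_pow (hX : TotallyNonneg X) (hX' : IsPosLowerTriangular X)
    (hY : TotallyNonneg Y) (hY' : IsPosLowerTriangular Y) :
    TotallyPos ((X * Yᵀ) ^ (n - 1)) := by
  intro k r c hr hc
  have hkn : k ≤ n := by simpa using Fintype.card_le_of_injective r hr.injective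
  obtain rfl | hlt := hkn.eq_or_lt
  · obtain rfl : r = c := funext fun i ↦
      (hr.apply_le.antisymm hr.le_apply).trans (hc.le_apply.antisymm hc.apply_le)
    exact (Settled.refl k r).det_submatrix_pow_pos hX hX' hY hY' hr hc (by lia)
  · exact (Settled.zero r c).det_submatrix_pow_pos hX hX' hY hY' hr hc (by lia)

end UpperBound

section LowerBound

open Matrix

/-- `X` has at most `w` nonzero diagonals below the main one: `w = 0` is upper triangular, `w = 1`
is upper Hessenberg. -/
def LowerBandwidthLE {n : ℕ} {R : Type*} [Zero R] (X : Matrix (Fin n) (Fin n) R) (w : ℕ) : Prop :=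
  ∀ i j : Fin n, j.val + w < i.val → X i j = 0

theorem LowerBandwidthLE.mul {n v w : ℕ} {R : Type*} [NonUnitalNonAssocSemiring R]
    {X Y : Matrix (Fin n) (Fin n) R} (hX : LowerBandwidthLE X v) (hY : LowerBandwidthLE Y w) :
    LowerBandwidthLE (X * Y) (v + w) := by
  intro i j hij
  rw [mul_apply]
  refine Finset.sum_eq_zero fun c _ ↦ ?_
  obtain hc | hc : c.val + v < i.val ∨ j.val + w < c.val := by lia
  · rw [hX i c hc, zero_mul]
  · rw [hY c j hc, mul_zero]

theorem lowerBandwidthLE_of_isUpperTriangular {n : ℕ} {R : Type*} [Zero R]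
    {X : Matrix (Fin n) (Fin n) R} (hX : X.IsUpperTriangular) : LowerBandwidthLE X 0 :=
  fun _ _ hij ↦ hX hij

theorem LowerBandwidthLE.pow {n w : ℕ} {R : Type*} [Semiring R] {X : Matrix (Fin n) (Fin n) R}
    (hX : LowerBandwidthLE X w) (r : ℕ) : LowerBandwidthLE (X ^ r) (r * w) := by
  induction r with
  | zero => simpa using lowerBandwidthLE_of_isUpperTriangular blockTriangular_one
  | succ r ih =>
    rw [pow_succ, Nat.succ_mul]
    exact ih.mul hX

theorem TotallyPos.inv_last_zero_ne_zero {m : ℕ} {M : Matrix (Fin (m + 1)) (Fin (m + 1)) ℝ}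
    (hM : TotallyPos M) : M⁻¹ (Fin.last m) 0 ≠ 0 := by
  have hdet : M.det ≠ 0 := (hM _ id id strictMono_id strictMono_id).ne'
  have hminor := (hM m _ _ (Fin.strictMono_succAbove 0) (Fin.strictMono_succAbove (.last m))).ne'
  rw [inv_def, Matrix.smul_apply, adjugate_fin_succ_eq_det_submatrix, Ring.inverse_eq_inv',
    smul_eq_mul]
  exact mul_ne_zero (inv_ne_zero hdet) (mul_ne_zero (pow_ne_zero _ (by norm_num)) hminor)

theorem LowerBandwidthLE.le_of_totallyPos_pow {n w r : ℕ} {A : Matrix (Fin n) (Fin n) ℝ}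
    (hA : LowerBandwidthLE A⁻¹ w) (hr : TotallyPos (A ^ r)) : n - 1 ≤ r * w := by
  obtain _ | m := n
  · exact Nat.zero_le _
  by_contra! hlt
  refine hr.inv_last_zero_ne_zero ?_
  rw [← inv_pow']
  exact hA.pow r _ _ (by simpa using hlt)

end LowerBound

section ElementaryFactors

open Matrix

theorem one_sub_sum_mul_list_prod {R : Type*} [Ring R] {m : ℕ} (x : Fin m → R)
    (hx : ∀ i j, i ≤ j → (x j - 1) * (x i - 1) = 0) :
    (1 - ∑ i, (x i - 1)) * (List.ofFn x).prod = 1 := by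
  induction m with
  | zero => simp
  | succ m ih =>
    have hsum : (∑ i, (x i - 1)) * (x 0 - 1) = 0 := by
      rw [Finset.sum_mul]
      exact Finset.sum_eq_zero fun i _ ↦ hx 0 i (Fin.zero_le i)
    have hhead : (1 - ∑ i, (x i - 1)) * x 0 = 1 - ∑ i : Fin m, (x i.succ - 1) :=
      calc (1 - ∑ i, (x i - 1)) * x 0
          = x 0 - (∑ i, (x i - 1)) * (x 0 - 1) - ∑ i, (x i - 1) := by noncomm_ring
        _ = 1 - ∑ i : Fin m, (x i.succ - 1) := by
          rw [hsum, Fin.sum_univ_succ]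
          abel
    rw [List.ofFn_succ, List.prod_cons, ← mul_assoc, hhead]
    exact ih _ fun i j hij ↦ hx _ _ (Fin.succ_le_succ_iff.2 hij)

variable {n : ℕ}

theorem Lmat_sub_one_apply (i : ℕ) (q : ℝ) (a b : Fin n) :
    (Lmat n i q - 1) a b = if a.val + 1 = i ∧ b.val + 2 = i then q else 0 := by
  rw [Lmat, add_sub_cancel_left, of_apply]

theorem Lmat_sub_one_mul_Lmat_sub_one {i j : ℕ} (hij : j ≤ i) (p q : ℝ) :
    (Lmat n j q - 1) * (Lmat n i p - 1) = 0 := by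
  ext a b
  rw [mul_apply, Matrix.zero_apply]
  refine Finset.sum_eq_zero fun c _ ↦ ?_
  simp only [Lmat_sub_one_apply]
  split_ifs <;> lia

theorem totallyNonneg_Lmat {i : ℕ} {q : ℝ} (hq : 0 ≤ q) : TotallyNonneg (Lmat n i q) := by
  refine .of_wcovBy (fun a b ↦ ?_) fun a b hab ↦ ?_
  · simp only [Lmat, Matrix.add_apply, one_apply, of_apply]
    split_ifs <;> positivity
  · obtain rfl | hab' : a = b ∨ a.val = b.val + 1 := by
      contrapose! hab
      rw [Lmat, Matrix.add_apply, one_apply_ne hab.1, of_apply, if_neg (by lia), add_zero]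
    · exact .rfl
    · exact ⟨Fin.le_def.2 (by lia), fun c hbc hca ↦ by lia⟩

theorem transpose_Umat (i : ℕ) (q : ℝ) : (Umat n i q)ᵀ = Lmat n i q := by
  ext a b
  simp [Umat, Lmat, one_apply, and_comm, eq_comm]

/-- The lower triangular factor `L_n(ℓ_1) L_{n-1}(ℓ_2) ⋯ L_2(ℓ_{n-1})`, with `ℓ` indexed
from `0`. -/
def lowerFactor (ℓ : Fin (n - 1) → ℝ) : Matrix (Fin n) (Fin n) ℝ :=
  (List.ofFn fun j : Fin (n - 1) ↦ Lmat n (n - j.val) (ℓ j)).prod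

/-- The matrix of multipliers on the first subdiagonal; `1 - subdiagonalPart ℓ` is the inverse of
`lowerFactor ℓ`. -/
def subdiagonalPart (ℓ : Fin (n - 1) → ℝ) : Matrix (Fin n) (Fin n) ℝ :=
  ∑ j : Fin (n - 1), (Lmat n (n - j.val) (ℓ j) - 1)

variable {ℓ : Fin (n - 1) → ℝ}

theorem subdiagonalPart_apply_of_ne {a b : Fin n} (hab : a.val ≠ b.val + 1) :
    subdiagonalPart ℓ a b = 0 := by
  rw [subdiagonalPart, Matrix.sum_apply]
  refine Finset.sum_eq_zero fun j _ ↦ ?_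
  rw [Lmat_sub_one_apply, if_neg (by lia)]

theorem subdiagonalPart_apply_of_eq {a b : Fin n} (hab : a.val = b.val + 1) :
    subdiagonalPart ℓ a b = ℓ ⟨n - 1 - a.val, by lia⟩ := by
  rw [subdiagonalPart, Matrix.sum_apply, Finset.sum_eq_single ⟨n - 1 - a.val, by lia⟩]
  · rw [Lmat_sub_one_apply, if_pos (by lia)]
  · intro j _ hj
    rw [Lmat_sub_one_apply, if_neg]
    contrapose! hj
    ext
    lia
  · simp

theorem subdiagonalPart_apply_nonneg (hℓ : ∀ j, 0 ≤ ℓ j) (a b : Fin n) :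
    0 ≤ subdiagonalPart ℓ a b := by
  by_cases hab : a.val = b.val + 1
  · exact (hℓ _).trans_eq (subdiagonalPart_apply_of_eq hab).symm
  · exact (subdiagonalPart_apply_of_ne hab).ge

theorem one_sub_subdiagonalPart_mul_lowerFactor (ℓ : Fin (n - 1) → ℝ) :
    (1 - subdiagonalPart ℓ) * lowerFactor ℓ = 1 :=
  one_sub_sum_mul_list_prod _ fun _ _ hij ↦
    Lmat_sub_one_mul_Lmat_sub_one (Nat.sub_le_sub_left hij n) _ _

theorem inv_lowerFactor (ℓ : Fin (n - 1) → ℝ) : (lowerFactor ℓ)⁻¹ = 1 - subdiagonalPart ℓ :=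
  inv_eq_left_inv (one_sub_subdiagonalPart_mul_lowerFactor ℓ)

theorem one_sub_subdiagonalPart_apply_of_ne {a b : Fin n} (hne : a ≠ b)
    (hab : a.val ≠ b.val + 1) : (1 - subdiagonalPart ℓ) a b = 0 := by
  rw [Matrix.sub_apply, one_apply_ne hne, subdiagonalPart_apply_of_ne hab, sub_zero]

theorem isLowerTriangular_one_sub_subdiagonalPart (ℓ : Fin (n - 1) → ℝ) :
    (1 - subdiagonalPart ℓ).IsLowerTriangular := fun a b (hab : a < b) ↦
  one_sub_subdiagonalPart_apply_of_ne hab.ne (by lia)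

theorem isLowerTriangular_lowerFactor (ℓ : Fin (n - 1) → ℝ) :
    (lowerFactor ℓ).IsLowerTriangular := by
  have hinv := one_sub_subdiagonalPart_mul_lowerFactor ℓ
  let := invertibleOfRightInverse _ _ hinv
  rw [← inv_eq_right_inv hinv]
  exact blockTriangular_inv_of_blockTriangular (isLowerTriangular_one_sub_subdiagonalPart ℓ)

theorem totallyNonneg_lowerFactor (hℓ : ∀ j, 0 ≤ ℓ j) : TotallyNonneg (lowerFactor ℓ) := by
  refine .list_prod fun X hX ↦ ?_
  obtain ⟨j, rfl⟩ := List.mem_ofFn.1 hX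
  exact totallyNonneg_Lmat (hℓ j)

theorem lowerFactor_eq_one_add (ℓ : Fin (n - 1) → ℝ) :
    lowerFactor ℓ = 1 + subdiagonalPart ℓ * lowerFactor ℓ := by
  rw [← sub_eq_iff_eq_add, ← one_sub_mul, one_sub_subdiagonalPart_mul_lowerFactor]

theorem isPosLowerTriangular_lowerFactor (hℓ : ∀ j, 0 < ℓ j) :
    IsPosLowerTriangular (lowerFactor ℓ) := by
  have hN := subdiagonalPart_apply_nonneg fun j ↦ (hℓ j).le
  have hL := (totallyNonneg_lowerFactor fun j ↦ (hℓ j).le).apply_nonneg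
  have hterm (a b c) : 0 ≤ subdiagonalPart ℓ a c * lowerFactor ℓ c b :=
    mul_nonneg (hN a c) (hL c b)
  refine ⟨isLowerTriangular_lowerFactor ℓ, fun a b hba ↦ ?_⟩
  obtain ⟨d, hd⟩ := Nat.exists_eq_add_of_le (Fin.le_def.1 hba)
  induction d generalizing a with
  | zero =>
    obtain rfl : a = b := Fin.ext hd
    rw [lowerFactor_eq_one_add, Matrix.add_apply, one_apply_eq, mul_apply]
    exact add_pos_of_pos_of_nonneg one_pos (Finset.sum_nonneg fun c _ ↦ hterm a a c)
  | succ d ih =>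
    let c : Fin n := ⟨b.val + d, by lia⟩
    have hac : 0 < subdiagonalPart ℓ a c := by
      rw [subdiagonalPart_apply_of_eq hd]
      exact hℓ _
    have hcb : 0 < lowerFactor ℓ c b := ih c (Fin.le_def.2 (Nat.le_add_right _ _)) rfl
    rw [lowerFactor_eq_one_add, Matrix.add_apply, mul_apply]
    exact add_pos_of_nonneg_of_pos (TotallyNonneg.one.apply_nonneg a b)
      (Finset.sum_pos' (fun c _ ↦ hterm a b c) ⟨c, Finset.mem_univ c, mul_pos hac hcb⟩)

theorem list_prod_Umat (u : Fin (n - 1) → ℝ) :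
    (List.ofFn fun j : Fin (n - 1) ↦ Umat n (j.val + 2) (u j)).prod =
      (lowerFactor fun j ↦ u j.rev)ᵀ := by
  rw [← transpose_inj, transpose_transpose, transpose_list_prod, List.map_ofFn, lowerFactor]
  congr 1
  refine List.ext_getElem (by simp) fun i hi hi' ↦ ?_
  have hin : i < n - 1 := by simpa using hi'
  simp only [List.getElem_reverse, List.getElem_ofFn, List.length_ofFn, Function.comp_apply,
    transpose_Umat]
  congr 2
  · lia
  · ext
    simp only [Fin.val_rev]
    lia

theorem lowerBandwidthLE_inv (ℓ v : Fin (n - 1) → ℝ) (d : Fin n → ℝ) :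
    LowerBandwidthLE (lowerFactor ℓ * diagonal d * (lowerFactor v)ᵀ)⁻¹ 1 := by
  have hL : LowerBandwidthLE (lowerFactor ℓ)⁻¹ 1 := fun i j hij ↦ by
    rw [inv_lowerFactor]
    exact one_sub_subdiagonalPart_apply_of_ne (by lia) (by lia)
  have hD : (diagonal d)⁻¹.IsUpperTriangular := by
    rw [inv_diagonal]
    exact blockTriangular_diagonal _
  have hV : ((lowerFactor v)ᵀ)⁻¹.IsUpperTriangular := by
    rw [← transpose_nonsing_inv, inv_lowerFactor]
    exact (isLowerTriangular_one_sub_subdiagonalPart v).transpose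
  rw [Matrix.mul_inv_rev, Matrix.mul_inv_rev]
  simpa using (lowerBandwidthLE_of_isUpperTriangular hV).mul
    ((lowerBandwidthLE_of_isUpperTriangular hD).mul hL)

end ElementaryFactors

/-- A = L_n(ℓ_1)L_{n−1}(ℓ_2)⋯L_2(ℓ_{n−1}) · D · U_2(u_{n−1})⋯U_{n−1}(u_2)U_n(u_1),
with all multipliers positive and D a positive diagonal matrix, is oscillatory with
exponent n−1. -/
theorem stmt17 {n : ℕ} (hn : 2 ≤ n) (ℓ u : Fin (n - 1) → ℝ) (dd : Fin n → ℝ)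
    (hℓ : ∀ j, 0 < ℓ j) (hu : ∀ j, 0 < u j) (hdd : ∀ i, 0 < dd i)
    (A : Matrix (Fin n) (Fin n) ℝ)
    (hA : A = (List.ofFn fun j : Fin (n - 1) => Lmat n (n - j.val) (ℓ j)).prod *
        Matrix.diagonal dd *
        (List.ofFn fun j : Fin (n - 1) => Umat n (j.val + 2) (u j)).prod) :
    TotallyNonneg A ∧ (∃ k : ℕ, 0 < k ∧ TotallyPos (A ^ k)) ∧
    IsLeast {r : ℕ | 0 < r ∧ TotallyPos (A ^ r)} (n - 1) := by
  set v : Fin (n - 1) → ℝ := fun j ↦ u j.rev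
  have hX := (totallyNonneg_lowerFactor fun j ↦ (hℓ j).le).mul (.diagonal fun i ↦ (hdd i).le)
  have hX' := (isPosLowerTriangular_lowerFactor hℓ).mul_diagonal hdd
  have hY : TotallyNonneg (lowerFactor v) := totallyNonneg_lowerFactor fun j ↦ (hu j.rev).le
  have hY' : IsPosLowerTriangular (lowerFactor v) :=
    isPosLowerTriangular_lowerFactor fun j ↦ hu j.rev
  replace hA : A = lowerFactor ℓ * Matrix.diagonal dd * (lowerFactor v).transpose := by
    rw [hA, list_prod_Umat]
    rfl
  subst hA
  have hpos := totallyPos_mul_transpose_pow hX hX' hY hY'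
  refine ⟨hX.mul hY.transpose, ⟨n - 1, by lia, hpos⟩, ⟨by lia, hpos⟩, fun r hr ↦ ?_⟩
  simpa using (lowerBandwidthLE_inv ℓ v dd).le_of_totallyPos_pow hr.2
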